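/- arXiv:math/0004096 — 2 statements merged into one kernel-verified Lean document; each statement's English description precedes it below -/
import Mathlib

section
/- Let T = (T_n)_{n≥3} be a family of functions T_n : ℕ^n → ℚ such that: (i) each T_n is symmetric, i.e. invariant under permutations of its arguments; (ii) T_3(0,0,0) = 1; (iii) the string equation holds: for every n ≥ 3 and every (m_1,…,m_n) ∈ ℕ^n, T_{n+1}(0, m_1,…,m_n) = ∑_{j : m_j ≥ 1} T_n(m_1,…,m_j − 1,…,m_n). Then for every n ≥ 3 and every (m_1,…,m_n) ∈ ℕ^n with m_1 + ⋯ + m_n = n − 3 one has T_n(m_1,…,m_n) = (n−3)! / (m_1! ⋯ m_n!). -/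
/-!
On the dimension constraint `m₁ + ⋯ + mₙ = n - 3` some `mᵢ` vanishes, so symmetry and the string
equation reduce `n + 1` points to `n`. The multinomial coefficients obey the same recursion:
classifying the words with letter multiplicities `mᵢ` by their first letter `j` leaves words in
which the multiplicity of `j` has dropped by one.
-/

section

open Finset Function
open scoped Nat

section Multinomial

variable {ι : Type*} [DecidableEq ι] {s : Finset ι} {f : ι → ℕ} {j : ι}

lemma sum_update_sub_one (hj : j ∈ s) (hfj : 1 ≤ f j) :
    ∑ i ∈ s, update f j (f j - 1) i = ∑ i ∈ s, f i - 1 := by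
  rw [sum_update_of_mem hj, sum_eq_add_sum_sdiff_singleton_of_mem hj f]
  omega

lemma mul_prod_factorial_update_sub_one (hj : j ∈ s) (hfj : 1 ≤ f j) :
    f j * ∏ i ∈ s, (update f j (f j - 1) i)! = ∏ i ∈ s, (f i)! := by
  simp only [apply_update fun _ => Nat.factorial]
  rw [prod_update_of_mem hj, ← mul_assoc, Nat.mul_factorial_pred (by omega),
    prod_eq_mul_prod_sdiff_singleton_of_mem hj]

lemma prod_factorial_mul_multinomial_update_sub_one (hj : j ∈ s) (hfj : 1 ≤ f j) :
    (∏ i ∈ s, (f i)!) * Nat.multinomial s (update f j (f j - 1)) =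
      f j * (∑ i ∈ s, f i - 1)! := by
  rw [← mul_prod_factorial_update_sub_one hj hfj, mul_assoc, Nat.multinomial_spec,
    sum_update_sub_one hj hfj]

theorem multinomial_eq_sum_update_sub_one (hf : ∑ i ∈ s, f i ≠ 0) :
    Nat.multinomial s f =
      ∑ j ∈ s, if 1 ≤ f j then Nat.multinomial s (update f j (f j - 1)) else 0 := by
  have hprod : 0 < ∏ i ∈ s, (f i)! := prod_pos fun i _ => (f i).factorial_pos
  refine Nat.eq_of_mul_eq_mul_left hprod ?_
  calc (∏ i ∈ s, (f i)!) * Nat.multinomial s f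
      = (∑ j ∈ s, f j) * (∑ i ∈ s, f i - 1)! := by
        rw [Nat.multinomial_spec, Nat.mul_factorial_pred hf]
    _ = ∑ j ∈ s, f j * (∑ i ∈ s, f i - 1)! := sum_mul ..
    _ = ∑ j ∈ s, (∏ i ∈ s, (f i)!) *
          if 1 ≤ f j then Nat.multinomial s (update f j (f j - 1)) else 0 := by
        refine sum_congr rfl fun j hj => ?_
        split_ifs with hfj
        · rw [prod_factorial_mul_multinomial_update_sub_one hj hfj]
        · rw [Nat.eq_zero_of_not_pos hfj, zero_mul, mul_zero]
    _ = _ := (mul_sum ..).symm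

end Multinomial

lemma multinomial_univ_comp_equiv {ι κ : Type*} [Fintype ι] [Fintype κ] (e : ι ≃ κ) (f : κ → ℕ) :
    Nat.multinomial univ (f ∘ e) = Nat.multinomial univ f := by
  simp only [Nat.multinomial, comp_apply, e.sum_comp f, e.prod_comp fun i => (f i)!]

lemma multinomial_univ_cons_zero {n : ℕ} (p : Fin n → ℕ) :
    Nat.multinomial univ (Fin.cons 0 p : Fin (n + 1) → ℕ) = Nat.multinomial univ p := by
  simp [Nat.multinomial, Fin.sum_univ_succ, Fin.prod_univ_succ]

lemma cast_multinomial {ι K : Type*} [DivisionSemiring K] [CharZero K] (s : Finset ι) (f : ι → ℕ) :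
    (Nat.multinomial s f : K) = (∑ i ∈ s, f i)! / (∏ i ∈ s, (f i)! : ℕ) :=
  Nat.cast_div (Nat.prod_factorial_dvd_factorial_sum s f)
    (Nat.cast_ne_zero.mpr (Nat.prod_factorial_pos s f).ne')

lemma exists_eq_zero_of_sum_lt_card {ι : Type*} {s : Finset ι} {f : ι → ℕ}
    (h : ∑ i ∈ s, f i < #s) : ∃ i ∈ s, f i = 0 := by
  obtain ⟨i, hi, hfi⟩ := exists_lt_of_sum_lt (h.trans_eq (card_eq_sum_ones s))
  exact ⟨i, hi, Nat.lt_one_iff.mp hfi⟩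

lemma exists_perm_comp_eq_cons {α : Type*} {n : ℕ} (m : Fin (n + 1) → α) (k : Fin (n + 1)) :
    ∃ (σ : Equiv.Perm (Fin (n + 1))) (p : Fin n → α), m ∘ σ = Fin.cons (m k) p :=
  ⟨Equiv.swap 0 k, Fin.tail (m ∘ Equiv.swap 0 k), by
    simpa using (Fin.cons_self_tail (m ∘ Equiv.swap 0 k)).symm⟩

theorem genus_zero_intersection_numbers_general {M : Type*} [AddCommMonoid M]
    (T : ∀ n : ℕ, (Fin n → ℕ) → M)
    (hsymm : ∀ n, 3 ≤ n → ∀ σ : Equiv.Perm (Fin n), ∀ m : Fin n → ℕ,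
      T n (m ∘ σ) = T n m)
    (hstring : ∀ n, 3 ≤ n → ∀ m : Fin n → ℕ,
      T (n + 1) (Fin.cons 0 m) =
        ∑ j : Fin n, if 1 ≤ m j then T n (update m j (m j - 1)) else 0)
    (n : ℕ) (hn : 3 ≤ n) (m : Fin n → ℕ) (hm : ∑ i, m i = n - 3) :
    T n m = Nat.multinomial univ m • T 3 (fun _ => 0) := by
  induction n, hn using Nat.le_induction with
  | base =>
    obtain rfl : m = fun _ => 0 := funext fun i => sum_eq_zero_iff.mp hm i (mem_univ i)
    simp [Nat.multinomial]
  | succ n hn ih =>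
    obtain ⟨k, -, hk⟩ : ∃ k ∈ univ, m k = 0 :=
      exists_eq_zero_of_sum_lt_card (by rw [hm, card_fin]; omega)
    obtain ⟨σ, p, hp⟩ := exists_perm_comp_eq_cons m k
    rw [hk] at hp
    have hpsum : ∑ i, p i = n + 1 - 3 :=
      calc ∑ i, p i = ∑ i, (Fin.cons 0 p : Fin (n + 1) → ℕ) i := by rw [Fin.sum_cons, zero_add]
        _ = ∑ i, m i := by rw [← hp]; exact Equiv.sum_comp σ m
        _ = n + 1 - 3 := hm
    rw [← hsymm (n + 1) (by omega) σ, ← multinomial_univ_comp_equiv σ, hp, hstring n hn,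
      multinomial_univ_cons_zero, multinomial_eq_sum_update_sub_one (by omega), sum_smul]
    refine sum_congr rfl fun j hj => ?_
    split_ifs with hpj
    · exact ih _ (by rw [sum_update_sub_one hj hpj]; omega)
    · exact (zero_smul ℕ _).symm

end

/-- **Genus-zero intersection numbers are determined by the string equation.**
If a family `T` of symmetric functions `T n : ℕ^n → ℚ` (for `n ≥ 3`) satisfies
`T 3 (0,0,0) = 1` and the string equation, then for every `n ≥ 3` and every
tuple `(m_1,…,m_n)` with `m_1 + ⋯ + m_n = n - 3` one has
`T n (m_1,…,m_n) = (n-3)! / (m_1! ⋯ m_n!)`. -/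
theorem genus_zero_intersection_numbers
    (T : ∀ n : ℕ, (Fin n → ℕ) → ℚ)
    (hsymm : ∀ n, 3 ≤ n → ∀ σ : Equiv.Perm (Fin n), ∀ m : Fin n → ℕ,
      T n (m ∘ σ) = T n m)
    (hinit : T 3 (fun _ => 0) = 1)
    (hstring : ∀ n, 3 ≤ n → ∀ m : Fin n → ℕ,
      T (n + 1) (Fin.cons 0 m) =
        ∑ j : Fin n, if 1 ≤ m j then T n (Function.update m j (m j - 1)) else 0)
    (n : ℕ) (hn : 3 ≤ n) (m : Fin n → ℕ) (hm : ∑ i, m i = n - 3) :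
    T n m = (Nat.factorial (n - 3) : ℚ) / ∏ i, (Nat.factorial (m i) : ℚ) := by
  rw [genus_zero_intersection_numbers_general T hsymm hstring n hn m hm, hinit, nsmul_one,
    cast_multinomial, hm, Nat.cast_prod]
end

section
/- Let n ≥ 2 and let (m_1,…,m_{n−1}) ∈ ℕ^{n−1} satisfy m_1 + ⋯ + m_{n−1} = n. Then ∑_{j : m_j ≥ 1} α_{n−1}(m_1,…,m_j − 1,…,m_{n−1}) = α_n(0, m_1,…,m_{n−1}), where for r ≥ 1 and (y_1,…,y_r) ∈ ℕ^r one sets α_r(y_1,…,y_r) = (1/(24 · y_1!⋯y_r!)) · ( r! − ∑_{i=2}^{r} (i−2)! (r−i)! e_i(y_1,…,y_r) ), and e_i denotes the i-th elementary symmetric polynomial e_i(y) = ∑_{S ⊆ {1,…,r}, |S| = i} ∏_{l ∈ S} y_l. -/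
/-- The `i`-th elementary symmetric polynomial of `y_1, …, y_r ∈ ℕ`, as a rational
number: `e_i(y) = ∑_{S ⊆ {1,…,r}, |S| = i} ∏_{l ∈ S} y_l`. -/
def esymmQ (r i : ℕ) (y : Fin r → ℕ) : ℚ :=
  ∑ S ∈ Finset.powersetCard i (Finset.univ : Finset (Fin r)), ∏ l ∈ S, (y l : ℚ)

/-- `α_r(y_1,…,y_r) = (1/(24 · y_1!⋯y_r!)) · ( r! − ∑_{i=2}^{r} (i−2)! (r−i)! e_i(y) )`. -/
def alphaCoeff (r : ℕ) (y : Fin r → ℕ) : ℚ :=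
  (1 / (24 * ∏ l, (Nat.factorial (y l) : ℚ))) *
    ((Nat.factorial r : ℚ) -
      ∑ i ∈ Finset.Icc 2 r,
        (Nat.factorial (i - 2) : ℚ) * (Nat.factorial (r - i) : ℚ) * esymmQ r i y)

/-!
Write `e_i` for the elementary symmetric polynomials, `|m| = ∑ m_j`, and `m - δ_j` for `m` with its
`j`-th entry decreased by `1`. As `e_i` is affine in each variable,
`m_j e_i(m - δ_j) = m_j e_i(m) - m_j ∂_j e_i(m)`, and Euler's identity for the homogeneous
polynomial `e_i` gives `∑_j m_j e_i(m - δ_j) = (|m| - i) e_i(m)`. Since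
`(|m| - i) (n - i)! = (n + 1 - i)! + (|m| - n - 1) (n - i)!`, the sum of the `α_n(m - δ_j)` exceeds
`α_{n+1}(0, m)` by `(|m| - n - 1) α_n(m)`, and the first factor is zero in the degree of the string
equation.
-/

section Decrement

open Finset Function
open scoped Nat

variable {ι : Type*} [DecidableEq ι]

lemma mul_prod_factorial_update_pred (m : ι → ℕ) {s : Finset ι} {j : ι} (hj : j ∈ s)
    (hmj : m j ≠ 0) :
    m j * ∏ l ∈ s, (update m j (m j - 1) l)! = ∏ l ∈ s, (m l)! := by
  have h_update : (fun l ↦ (update m j (m j - 1) l)!) = update (fun l ↦ (m l)!) j (m j - 1)! :=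
    funext fun l ↦ apply_update (fun _ ↦ Nat.factorial) m j (m j - 1) l
  rw [h_update, prod_update_of_mem hj, ← mul_assoc, Nat.mul_factorial_pred hmj,
    sdiff_singleton_eq_erase, mul_prod_erase s (fun l ↦ (m l)!) hj]

variable {R : Type*} [CommRing R]

lemma mul_prod_update_pred (m : ι → ℕ) (s : Finset ι) (j : ι) :
    (m j : R) * ∏ l ∈ s, (update m j (m j - 1) l : R) =
      (m j - if j ∈ s then 1 else 0) * ∏ l ∈ s, (m l : R) := by
  have h_update : (fun l ↦ (update m j (m j - 1) l : R)) =
      update (fun l ↦ (m l : R)) j ((m j - 1 : ℕ) : R) :=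
    funext fun l ↦ apply_update (fun _ ↦ Nat.cast) m j (m j - 1) l
  -- The truncation of `m j - 1` at `m j = 0` is harmless because of the factor `m j`.
  have h_pred : (m j : R) * ((m j - 1 : ℕ) : R) = (m j - 1) * m j := by
    cases m j <;> simp [mul_comm]
  rw [h_update]
  split_ifs with hj
  · rw [prod_update_of_mem hj, ← mul_assoc, h_pred, mul_assoc, sdiff_singleton_eq_erase,
      mul_prod_erase s (fun l ↦ (m l : R)) hj]
  · rw [prod_update_of_notMem hj, sub_zero]

lemma sum_mul_prod_update_pred [Fintype ι] (m : ι → ℕ) (s : Finset ι) :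
    ∑ j, (m j : R) * ∏ l ∈ s, (update m j (m j - 1) l : R) =
      (∑ j, (m j : R) - #s) * ∏ l ∈ s, (m l : R) := by
  simp only [mul_prod_update_pred, ← sum_mul, sum_sub_distrib, sum_boole, filter_univ_mem]

end Decrement

lemma multiset_esymm_cons_succ {R : Type*} [CommSemiring R] (a : R) (s : Multiset R) (k : ℕ) :
    (a ::ₘ s).esymm (k + 1) = s.esymm (k + 1) + a * s.esymm k := by
  simp only [Multiset.esymm, Multiset.powersetCard_cons, Multiset.map_add, Multiset.sum_add,
    Multiset.map_map, Function.comp_def, Multiset.prod_cons, Multiset.sum_map_mul_left]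

open scoped Nat in
lemma sub_mul_factorial_sub {R : Type*} [CommRing R] {n i : ℕ} (hi : i ≤ n) (d : R) :
    (d - i) * (n - i)! = (n + 1 - i)! + (d - (n + 1)) * (n - i)! := by
  rw [Nat.succ_sub hi, Nat.factorial_succ]
  push_cast [Nat.cast_sub hi]
  ring

section StringEquation

open Finset Function
open scoped Nat

lemma esymmQ_eq_multiset_esymm {n : ℕ} (i : ℕ) (m : Fin n → ℕ) :
    esymmQ n i m = (univ.val.map fun l ↦ (m l : ℚ)).esymm i :=
  (esymm_map_val _ _ _).symm

lemma esymmQ_cons_zero {n : ℕ} (i : ℕ) (m : Fin n → ℕ) :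
    esymmQ (n + 1) i (Fin.cons 0 m) = esymmQ n i m := by
  have h_entries : (univ.val.map fun l ↦ ((Fin.cons 0 m : Fin (n + 1) → ℕ) l : ℚ)) =
      0 ::ₘ univ.val.map fun l ↦ (m l : ℚ) := by
    simp [Fin.univ_succ, Function.comp_def]
  rw [esymmQ_eq_multiset_esymm, esymmQ_eq_multiset_esymm, h_entries]
  cases i with
  | zero => simp only [Multiset.esymm, Multiset.powersetCard_zero_left]
  | succ k => rw [multiset_esymm_cons_succ, zero_mul, add_zero]

lemma esymmQ_eq_zero_of_lt {n i : ℕ} (h : n < i) (m : Fin n → ℕ) : esymmQ n i m = 0 := by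
  rw [esymmQ, powersetCard_eq_empty.mpr (by simpa using h), sum_empty]

lemma sum_mul_esymmQ_update_pred {n : ℕ} (i : ℕ) (m : Fin n → ℕ) :
    ∑ j, (m j : ℚ) * esymmQ n i (update m j (m j - 1)) =
      (∑ j, (m j : ℚ) - i) * esymmQ n i m := by
  simp only [esymmQ, mul_sum]
  rw [sum_comm]
  refine sum_congr rfl fun s hs ↦ ?_
  rw [sum_mul_prod_update_pred, (mem_powersetCard.mp hs).2]

/-- The second factor `r! - ∑_{i=2}^r (i-2)! (r-i)! e_i(y)` in the definition of `α_r(y)`. Unlike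
`α_r(y)` itself it is a polynomial in `y`. -/
def alphaBracket (r : ℕ) (y : Fin r → ℕ) : ℚ :=
  (r ! : ℚ) - ∑ i ∈ Icc 2 r, (i - 2)! * (r - i)! * esymmQ r i y

lemma alphaCoeff_eq_alphaBracket_div {r : ℕ} (y : Fin r → ℕ) :
    alphaCoeff r y = alphaBracket r y / (24 * ∏ l, ((y l)! : ℚ)) :=
  one_div_mul_eq_div _ _

lemma alphaCoeff_cons_zero {n : ℕ} (m : Fin n → ℕ) :
    alphaCoeff (n + 1) (Fin.cons 0 m) =
      alphaBracket (n + 1) (Fin.cons 0 m) / (24 * ∏ l, ((m l)! : ℚ)) := by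
  simp only [alphaCoeff_eq_alphaBracket_div, Fin.prod_univ_succ, Fin.cons_zero, Fin.cons_succ,
    Nat.factorial_zero, Nat.cast_one, one_mul]

lemma ite_alphaCoeff_update_pred {n : ℕ} (m : Fin n → ℕ) (j : Fin n) :
    (if 1 ≤ m j then alphaCoeff n (update m j (m j - 1)) else 0) =
      m j * alphaBracket n (update m j (m j - 1)) / (24 * ∏ l, ((m l)! : ℚ)) := by
  split_ifs with hj
  · have hmj : m j ≠ 0 := Nat.one_le_iff_ne_zero.mp hj
    have h_fact : (m j : ℚ) * ∏ l, ((update m j (m j - 1) l)! : ℚ) = ∏ l, ((m l)! : ℚ) :=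
      mod_cast mul_prod_factorial_update_pred m (mem_univ j) hmj
    rw [alphaCoeff_eq_alphaBracket_div, ← h_fact, mul_left_comm,
      mul_div_mul_left _ _ (Nat.cast_ne_zero.mpr hmj)]
  · rw [Nat.lt_one_iff.mp (not_le.mp hj), Nat.cast_zero, zero_mul, zero_div]

lemma alphaBracket_cons_zero {n : ℕ} (m : Fin n → ℕ) :
    alphaBracket (n + 1) (Fin.cons 0 m) =
      ((n + 1)! : ℚ) - ∑ i ∈ Icc 2 n, (i - 2)! * (n + 1 - i)! * esymmQ n i m := by
  simp only [alphaBracket, esymmQ_cons_zero]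
  congr 1
  refine (sum_subset (Icc_subset_Icc_right n.le_succ) fun i hi hi' ↦ ?_).symm
  have hni : n < i := by
    simp only [mem_Icc] at hi hi'
    omega
  rw [esymmQ_eq_zero_of_lt hni, mul_zero]

lemma sum_mul_alphaBracket_update_pred {n : ℕ} (m : Fin n → ℕ) :
    ∑ j, (m j : ℚ) * alphaBracket n (update m j (m j - 1)) =
      (∑ j, (m j : ℚ)) * (n ! : ℚ) -
        ∑ i ∈ Icc 2 n, (i - 2)! * (n - i)! * ((∑ j, (m j : ℚ) - i) * esymmQ n i m) := by
  simp only [alphaBracket, mul_sub, sum_sub_distrib, ← sum_mul, ← sum_mul_esymmQ_update_pred,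
    mul_sum]
  rw [sum_comm]
  simp only [mul_left_comm]

lemma alphaBracket_string_equation {n : ℕ} (m : Fin n → ℕ) :
    ∑ j, (m j : ℚ) * alphaBracket n (update m j (m j - 1)) =
      alphaBracket (n + 1) (Fin.cons 0 m) + (∑ j, (m j : ℚ) - (n + 1)) * alphaBracket n m := by
  set d : ℚ := ∑ j, (m j : ℚ)
  have h_lead : d * n ! = (n + 1)! + (d - (n + 1)) * n ! := by
    simpa using sub_mul_factorial_sub n.zero_le d
  have h_tail : ∑ i ∈ Icc 2 n, (i - 2)! * (n - i)! * ((d - i) * esymmQ n i m) =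
      ∑ i ∈ Icc 2 n, (i - 2)! * (n + 1 - i)! * esymmQ n i m +
        (d - (n + 1)) * ∑ i ∈ Icc 2 n, (i - 2)! * (n - i)! * esymmQ n i m := by
    rw [mul_sum, ← sum_add_distrib]
    refine sum_congr rfl fun i hi ↦ ?_
    linear_combination
      (i - 2)! * esymmQ n i m * sub_mul_factorial_sub (mem_Icc.mp hi).2 d
  rw [sum_mul_alphaBracket_update_pred, alphaBracket_cons_zero, alphaBracket, h_lead, h_tail]
  ring

theorem alphaCoeff_string_equation_general (n : ℕ) (m : Fin n → ℕ) :
    ∑ j, (if 1 ≤ m j then alphaCoeff n (update m j (m j - 1)) else 0) =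
      alphaCoeff (n + 1) (Fin.cons 0 m) + (∑ j, (m j : ℚ) - (n + 1)) * alphaCoeff n m := by
  simp only [ite_alphaCoeff_update_pred]
  rw [← sum_div, alphaBracket_string_equation, add_div, mul_div_assoc, ← alphaCoeff_cons_zero,
    ← alphaCoeff_eq_alphaBracket_div]

end StringEquation

/-- **The coefficients `α` obey the genus-one string equation.**  For a tuple
`(m_1,…,m_{n'−1})` of length `n'−1 ≥ 1` (written below with `n = n'−1`, so `n' = n+1 ≥ 2`)
summing to `n'`, the sum over those `j` with `m_j ≥ 1` of the values of `α` at the tuples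
obtained by decreasing `m_j` by `1` equals the value of `α` at the tuple with a zero
entry prepended:
`∑_{j : m_j ≥ 1} α_{n'−1}(m_1,…,m_j − 1,…,m_{n'−1}) = α_{n'}(0, m_1,…,m_{n'−1})`. -/
theorem alphaCoeff_string_equation (n : ℕ) (hn : 1 ≤ n) (m : Fin n → ℕ)
    (hm : ∑ i, m i = n + 1) :
    ∑ j : Fin n,
        (if 1 ≤ m j then alphaCoeff n (Function.update m j (m j - 1)) else 0) =
      alphaCoeff (n + 1) (Fin.cons 0 m) := by
  have h_degree : (∑ i, (m i : ℚ)) = n + 1 := mod_cast hm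
  rw [alphaCoeff_string_equation_general, h_degree, sub_self, zero_mul, add_zero]
end
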